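/- Let Ω ⊆ ℝ² be open, λ ∈ ℝ, let ψ : ℝ² → ℝ and p : ℝ² → ℝ be smooth on Ω, and set u = (∂₂ψ, −∂₁ψ). If Δu + λu = ∇p on Ω (componentwise), then ψ solves the buckling equation Δ(Δψ) + λΔψ = 0 on Ω. -/

import Mathlib

/-!
On `Ω` the partial derivatives of smooth functions are smooth and commute, so the Laplacian
commutes with them. With `w = Δψ + λψ` the two components of the Stokes equation become the
Cauchy–Riemann-type system `∂₁p = ∂₂w`, `∂₂p = -∂₁w`. Hence `Δw = ∂₂∂₁p - ∂₁∂₂p = 0` by the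
symmetry of second derivatives of `p`, and `Δw = Δ(Δψ) + λΔψ`.
-/

open MeasureTheory

/-- First partial derivative (with respect to the first coordinate of `ℝ × ℝ`). -/
noncomputable def pd1 (f : ℝ × ℝ → ℝ) : ℝ × ℝ → ℝ := fun x => fderiv ℝ f x (1, 0)

/-- Second partial derivative (with respect to the second coordinate of `ℝ × ℝ`). -/
noncomputable def pd2 (f : ℝ × ℝ → ℝ) : ℝ × ℝ → ℝ := fun x => fderiv ℝ f x (0, 1)

/-- The Laplacian on `ℝ × ℝ`. -/
noncomputable def lap (f : ℝ × ℝ → ℝ) : ℝ × ℝ → ℝ := fun x => pd1 (pd1 f) x + pd2 (pd2 f) x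

lemma pd1_smooth {Ω : Set (ℝ × ℝ)} (hΩ : IsOpen Ω) {f : ℝ × ℝ → ℝ}
    (hf : ContDiffOn ℝ (⊤ : ℕ∞) f Ω) : ContDiffOn ℝ (⊤ : ℕ∞) (pd1 f) Ω :=
  (hf.fderiv_of_isOpen hΩ (by simp)).clm_apply contDiffOn_const

lemma pd2_smooth {Ω : Set (ℝ × ℝ)} (hΩ : IsOpen Ω) {f : ℝ × ℝ → ℝ}
    (hf : ContDiffOn ℝ (⊤ : ℕ∞) f Ω) : ContDiffOn ℝ (⊤ : ℕ∞) (pd2 f) Ω :=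
  (hf.fderiv_of_isOpen hΩ (by simp)).clm_apply contDiffOn_const

lemma lap_smooth {Ω : Set (ℝ × ℝ)} (hΩ : IsOpen Ω) {f : ℝ × ℝ → ℝ}
    (hf : ContDiffOn ℝ (⊤ : ℕ∞) f Ω) : ContDiffOn ℝ (⊤ : ℕ∞) (lap f) Ω :=
  (pd1_smooth hΩ (pd1_smooth hΩ hf)).add (pd2_smooth hΩ (pd2_smooth hΩ hf))

lemma smooth_differentiableAt {Ω : Set (ℝ × ℝ)} (hΩ : IsOpen Ω) {f : ℝ × ℝ → ℝ}
    (hf : ContDiffOn ℝ (⊤ : ℕ∞) f Ω) {x : ℝ × ℝ} (hx : x ∈ Ω) : DifferentiableAt ℝ f x :=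
  (hf.contDiffAt (hΩ.mem_nhds hx)).differentiableAt (by simp)

lemma pd1_congr {Ω : Set (ℝ × ℝ)} (hΩ : IsOpen Ω) {f g : ℝ × ℝ → ℝ}
    (h : Set.EqOn f g Ω) : Set.EqOn (pd1 f) (pd1 g) Ω := fun x hx => by
  simp only [pd1, (h.eventuallyEq_of_mem (hΩ.mem_nhds hx)).fderiv_eq]

lemma pd2_congr {Ω : Set (ℝ × ℝ)} (hΩ : IsOpen Ω) {f g : ℝ × ℝ → ℝ}
    (h : Set.EqOn f g Ω) : Set.EqOn (pd2 f) (pd2 g) Ω := fun x hx => by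
  simp only [pd2, (h.eventuallyEq_of_mem (hΩ.mem_nhds hx)).fderiv_eq]

/-- Linearity of `∂₁`, in the form `∂₁(f + c g) = ∂₁f + c ∂₁g`. -/
lemma pd1_add_mul {Ω : Set (ℝ × ℝ)} (hΩ : IsOpen Ω) {f g : ℝ × ℝ → ℝ} (c : ℝ)
    (hf : ContDiffOn ℝ (⊤ : ℕ∞) f Ω) (hg : ContDiffOn ℝ (⊤ : ℕ∞) g Ω) :
    Set.EqOn (pd1 fun y => f y + c * g y) (fun y => pd1 f y + c * pd1 g y) Ω := fun x hx => by
  have hf' := smooth_differentiableAt hΩ hf hx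
  have hg' := smooth_differentiableAt hΩ hg hx
  simp [pd1, fderiv_fun_add hf' (hg'.const_mul c), fderiv_const_mul hg' c]

/-- Linearity of `∂₂`, in the form `∂₂(f + c g) = ∂₂f + c ∂₂g`. -/
lemma pd2_add_mul {Ω : Set (ℝ × ℝ)} (hΩ : IsOpen Ω) {f g : ℝ × ℝ → ℝ} (c : ℝ)
    (hf : ContDiffOn ℝ (⊤ : ℕ∞) f Ω) (hg : ContDiffOn ℝ (⊤ : ℕ∞) g Ω) :
    Set.EqOn (pd2 fun y => f y + c * g y) (fun y => pd2 f y + c * pd2 g y) Ω := fun x hx => by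
  have hf' := smooth_differentiableAt hΩ hf hx
  have hg' := smooth_differentiableAt hΩ hg hx
  simp [pd2, fderiv_fun_add hf' (hg'.const_mul c), fderiv_const_mul hg' c]

lemma pd1_neg (f : ℝ × ℝ → ℝ) : pd1 (fun y => -f y) = fun y => -pd1 f y := by
  ext x; simp [pd1, fderiv_fun_neg]

lemma pd2_neg (f : ℝ × ℝ → ℝ) : pd2 (fun y => -f y) = fun y => -pd2 f y := by
  ext x; simp [pd2, fderiv_fun_neg]

lemma lap_neg (f : ℝ × ℝ → ℝ) : lap (fun y => -f y) = fun y => -lap f y := by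
  ext x; simp only [lap, pd1_neg, pd2_neg]; ring

lemma pd_comm {Ω : Set (ℝ × ℝ)} (hΩ : IsOpen Ω) {f : ℝ × ℝ → ℝ}
    (hf : ContDiffOn ℝ (⊤ : ℕ∞) f Ω) : Set.EqOn (pd1 (pd2 f)) (pd2 (pd1 f)) Ω := fun x hx => by
  have hd : DifferentiableAt ℝ (fderiv ℝ f) x :=
    ((hf.fderiv_of_isOpen (m := (⊤ : ℕ∞)) hΩ (by simp)).contDiffAt
      (hΩ.mem_nhds hx)).differentiableAt (by simp)
  have hs : IsSymmSndFDerivAt ℝ f x :=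
    (hf.contDiffAt (hΩ.mem_nhds hx)).isSymmSndFDerivAt
      (by simp only [minSmoothness_of_isRCLikeNormedField]; exact WithTop.coe_le_coe.2 (le_top : (2 : ℕ∞) ≤ ⊤))
  have key : ∀ v w : ℝ × ℝ,
      fderiv ℝ (fun y => fderiv ℝ f y v) x w = fderiv ℝ (fderiv ℝ f) x w v := fun v w => by
    simp [fderiv_clm_apply hd (differentiableAt_const v)]
  change fderiv ℝ (fun y => fderiv ℝ f y (0, 1)) x (1, 0)
    = fderiv ℝ (fun y => fderiv ℝ f y (1, 0)) x (0, 1)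
  rw [key, key]
  exact hs _ _

lemma lap_add_mul {Ω : Set (ℝ × ℝ)} (hΩ : IsOpen Ω) {f g : ℝ × ℝ → ℝ} (c : ℝ)
    (hf : ContDiffOn ℝ (⊤ : ℕ∞) f Ω) (hg : ContDiffOn ℝ (⊤ : ℕ∞) g Ω) :
    Set.EqOn (lap fun y => f y + c * g y) (fun y => lap f y + c * lap g y) Ω := fun x hx => by
  have h1 := (pd1_congr hΩ (pd1_add_mul hΩ c hf hg)).trans
    (pd1_add_mul hΩ c (pd1_smooth hΩ hf) (pd1_smooth hΩ hg)) hx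
  have h2 := (pd2_congr hΩ (pd2_add_mul hΩ c hf hg)).trans
    (pd2_add_mul hΩ c (pd2_smooth hΩ hf) (pd2_smooth hΩ hg)) hx
  simp only [lap] at *
  rw [h1, h2]; ring

lemma lap_pd1 {Ω : Set (ℝ × ℝ)} (hΩ : IsOpen Ω) {f : ℝ × ℝ → ℝ}
    (hf : ContDiffOn ℝ (⊤ : ℕ∞) f Ω) : Set.EqOn (lap (pd1 f)) (pd1 (lap f)) Ω := fun x hx => by
  have h := pd1_add_mul hΩ 1 (pd1_smooth hΩ (pd1_smooth hΩ hf))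
    (pd2_smooth hΩ (pd2_smooth hΩ hf)) hx
  have e : pd2 (pd2 (pd1 f)) x = pd1 (pd2 (pd2 f)) x :=
    (pd2_congr hΩ (pd_comm hΩ hf) hx).symm.trans (pd_comm hΩ (pd2_smooth hΩ hf) hx).symm
  simp only [one_mul] at h
  exact (congrArg (pd1 (pd1 (pd1 f)) x + ·) e).trans h.symm

lemma lap_pd2 {Ω : Set (ℝ × ℝ)} (hΩ : IsOpen Ω) {f : ℝ × ℝ → ℝ}
    (hf : ContDiffOn ℝ (⊤ : ℕ∞) f Ω) : Set.EqOn (lap (pd2 f)) (pd2 (lap f)) Ω := fun x hx => by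
  have h := pd2_add_mul hΩ 1 (pd1_smooth hΩ (pd1_smooth hΩ hf))
    (pd2_smooth hΩ (pd2_smooth hΩ hf)) hx
  have e : pd1 (pd1 (pd2 f)) x = pd2 (pd1 (pd1 f)) x :=
    (pd1_congr hΩ (pd_comm hΩ hf) hx).trans (pd_comm hΩ (pd1_smooth hΩ hf) hx)
  simp only [one_mul] at h
  exact (congrArg (· + pd2 (pd2 (pd2 f)) x) e).trans h.symm

theorem stmt6 (Ω : Set (ℝ × ℝ)) (hΩ : IsOpen Ω) (lam : ℝ)
    (ψ : ℝ × ℝ → ℝ) (p : ℝ × ℝ → ℝ)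
    (hψ : ContDiffOn ℝ (⊤ : ℕ∞) ψ Ω) (hp : ContDiffOn ℝ (⊤ : ℕ∞) p Ω)
    (u : ℝ × ℝ → ℝ × ℝ) (hu : u = fun x => (pd2 ψ x, - pd1 ψ x))
    (heq : ∀ x ∈ Ω,
      lap (fun y => (u y).1) x + lam * (u x).1 = pd1 p x ∧
      lap (fun y => (u y).2) x + lam * (u x).2 = pd2 p x) :
    ∀ x ∈ Ω, lap (lap ψ) x + lam * lap ψ x = 0 := by
  subst hu
  have hL := lap_smooth hΩ hψ
  -- The Stokes equation in terms of `w = Δψ + λψ`: `∂₂w = ∂₁p` and `∂₁w = -∂₂p`.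
  have h2 : Set.EqOn (pd2 fun y => lap ψ y + lam * ψ y) (pd1 p) Ω := fun y hy => by
    have h := (heq y hy).1
    have e := lap_pd2 hΩ hψ hy
    rw [pd2_add_mul hΩ lam hL hψ hy]
    change lap (pd2 ψ) y + lam * pd2 ψ y = pd1 p y at h
    linarith
  have h1 : Set.EqOn (pd1 fun y => lap ψ y + lam * ψ y) (fun y => -pd2 p y) Ω := fun y hy => by
    have h := (heq y hy).2
    have e := lap_pd1 hΩ hψ hy
    rw [pd1_add_mul hΩ lam hL hψ hy]
    change lap (fun z => -pd1 ψ z) y + lam * -pd1 ψ y = pd2 p y at h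
    rw [lap_neg] at h
    linarith
  intro x hx
  have hw := lap_add_mul hΩ lam hL hψ hx
  have e1 := pd1_congr hΩ h1 hx
  have e2 := pd2_congr hΩ h2 hx
  rw [pd1_neg] at e1
  have e3 := pd_comm hΩ hp hx
  change pd1 (pd1 fun y => lap ψ y + lam * ψ y) x + pd2 (pd2 fun y => lap ψ y + lam * ψ y) x
    = lap (lap ψ) x + lam * lap ψ x at hw
  linarith
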